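/- arXiv:2410.22169 — 3 statements merged into one kernel-verified Lean document; each statement's English description precedes it below -/
import Mathlib

section
/- Suppose u* ∈ ℝⁿ satisfies AᵀAu* = Aᵀb and Lu* = g, and suppose in addition that A has trivial kernel (full column rank, m ≥ n). If γ > 0 and u_γ ∈ ℝⁿ minimizes J_γ over ℝⁿ, then u_γ = u*; i.e., the stabilized-regularized minimizer coincides with u* for every positive regularization parameter γ. -/
/-!
The point `u⋆` is a least-squares solution at which the two `γ`-terms of `J_γ` vanish. These terms
are nonnegative, so `J_γ(u) ≤ J_γ(u⋆)` forces `‖Au - b‖ ≤ ‖Au⋆ - b‖`. By Pythagoras the point of the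
range of `A` nearest to `b` is unique, hence `Au = Au⋆`, and `u = u⋆` once `A` is injective.
-/

open scoped Matrix RealInnerProductSpace

/-- Multiplication of a Euclidean vector by a real matrix, landing in Euclidean space
(so that `‖·‖` and `⟪·,·⟫` denote the Euclidean norm and inner product). -/
noncomputable def mulE {m n : ℕ} (A : Matrix (Fin m) (Fin n) ℝ)
    (v : EuclideanSpace ℝ (Fin n)) : EuclideanSpace ℝ (Fin m) :=
  Matrix.toEuclideanLin A v

/-- The stabilized-regularized functional
`J_γ(v) = ½‖Av − b‖² − ½‖b‖² + (γ/2)‖AᵀAv − Aᵀb‖² + (γ/2) N(Lv − g)²`,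
where `N` is a seminorm on `ℝᵖ`. -/
noncomputable def Jg {m n p : ℕ} (A : Matrix (Fin m) (Fin n) ℝ)
    (b : EuclideanSpace ℝ (Fin m)) (L : Matrix (Fin p) (Fin n) ℝ)
    (g : EuclideanSpace ℝ (Fin p)) (N : Seminorm ℝ (EuclideanSpace ℝ (Fin p)))
    (γ : ℝ) (v : EuclideanSpace ℝ (Fin n)) : ℝ :=
  (1 / 2) * ‖mulE A v - b‖ ^ 2 - (1 / 2) * ‖b‖ ^ 2
    + (γ / 2) * ‖mulE Aᵀ (mulE A v) - mulE Aᵀ b‖ ^ 2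
    + (γ / 2) * (N (mulE L v - g)) ^ 2

section Hilbert

variable {𝕜 E F G : Type*} [RCLike 𝕜]
variable [NormedAddCommGroup E] [InnerProductSpace 𝕜 E]
variable [NormedAddCommGroup F] [InnerProductSpace 𝕜 F]

theorem eq_of_sub_mem_orthogonal_of_norm_sub_le {K : Submodule 𝕜 F} {b y z : F}
    (hy : y ∈ K) (hz : z ∈ K) (horth : y - b ∈ Kᗮ) (hle : ‖z - b‖ ≤ ‖y - b‖) : z = y := by
  have pythagoras : ‖z - b‖ * ‖z - b‖ = ‖z - y‖ * ‖z - y‖ + ‖y - b‖ * ‖y - b‖ := by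
    rw [← sub_add_sub_cancel z y b]
    exact norm_add_sq_eq_norm_sq_add_norm_sq_of_inner_eq_zero (𝕜 := 𝕜) _ _
      (horth _ (K.sub_mem hz hy))
  have hsq : ‖z - b‖ * ‖z - b‖ ≤ ‖y - b‖ * ‖y - b‖ := by gcongr
  have hzero : ‖z - y‖ * ‖z - y‖ = 0 := le_antisymm (by linarith) (mul_self_nonneg _)
  exact sub_eq_zero.mp (norm_eq_zero.mp (mul_self_eq_zero.mp hzero))

variable [CompleteSpace E] [CompleteSpace F]

theorem map_eq_of_normal_equation_of_norm_sub_le {A : E →L[𝕜] F} {b : F} {x u : E}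
    (hnormal : A.adjoint (A x) = A.adjoint b) (hle : ‖A u - b‖ ≤ ‖A x - b‖) : A u = A x := by
  have horth : A x - b ∈ A.rangeᗮ := by
    rw [A.orthogonal_range, LinearMap.mem_ker, ContinuousLinearMap.coe_coe, map_sub,
      hnormal, sub_self]
  exact eq_of_sub_mem_orthogonal_of_norm_sub_le (LinearMap.mem_range_self _ x)
    (LinearMap.mem_range_self _ u) horth hle

variable [AddGroup G]

/-- The stabilized-regularized functional of a bounded operator `A` between Hilbert spaces, for
which the functional `J_γ` of matrices is the Euclidean case. The regularization operator `L` is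
an arbitrary map into an additive group. -/
noncomputable def stabilizedFunctional (A : E →L[𝕜] F) (b : F) (L : E → G) (g : G)
    (N : AddGroupSeminorm G) (γ : ℝ) (v : E) : ℝ :=
  (1 / 2) * ‖A v - b‖ ^ 2 - (1 / 2) * ‖b‖ ^ 2
    + (γ / 2) * ‖A.adjoint (A v) - A.adjoint b‖ ^ 2
    + (γ / 2) * (N (L v - g)) ^ 2

variable {A : E →L[𝕜] F} {b : F} {L : E → G} {g : G} {N : AddGroupSeminorm G} {γ : ℝ}

theorem le_stabilizedFunctional (hγ : 0 ≤ γ) (v : E) :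
    (1 / 2) * ‖A v - b‖ ^ 2 - (1 / 2) * ‖b‖ ^ 2 ≤ stabilizedFunctional A b L g N γ v := by
  have hstab : 0 ≤ (γ / 2) * ‖A.adjoint (A v) - A.adjoint b‖ ^ 2 := by positivity
  have hreg : 0 ≤ (γ / 2) * (N (L v - g)) ^ 2 := by positivity
  unfold stabilizedFunctional
  linarith

theorem stabilizedFunctional_eq_of_normal_equation {x : E}
    (hnormal : A.adjoint (A x) = A.adjoint b) (hreg : L x = g) :
    stabilizedFunctional A b L g N γ x = (1 / 2) * ‖A x - b‖ ^ 2 - (1 / 2) * ‖b‖ ^ 2 := by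
  simp [stabilizedFunctional, hnormal, hreg]

theorem stmt4_general (hγ : 0 ≤ γ) {ustar u : E}
    (hnormal : A.adjoint (A ustar) = A.adjoint b) (hreg : L ustar = g)
    (hle : stabilizedFunctional A b L g N γ u ≤ stabilizedFunctional A b L g N γ ustar) :
    A u = A ustar := by
  refine map_eq_of_normal_equation_of_norm_sub_le hnormal ?_
  have hbound := (le_stabilizedFunctional hγ u).trans hle
  rw [stabilizedFunctional_eq_of_normal_equation hnormal hreg] at hbound
  exact (sq_le_sq₀ (norm_nonneg _) (norm_nonneg _)).mp (by linarith)

end Hilbert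

section Matrix

variable {m n p : ℕ}

/-- The bounded operator `v ↦ Av` between Euclidean spaces; as a bundled map it has a Hilbert-space
adjoint, unlike the bare function `mulE A`. -/
noncomputable def mulCLM (A : Matrix (Fin m) (Fin n) ℝ) :
    EuclideanSpace ℝ (Fin n) →L[ℝ] EuclideanSpace ℝ (Fin m) :=
  A.toEuclideanLin.toContinuousLinearMap

theorem adjoint_mulCLM (A : Matrix (Fin m) (Fin n) ℝ) : (mulCLM A).adjoint = mulCLM Aᵀ := by
  rw [mulCLM, mulCLM, ← LinearMap.adjoint_toContinuousLinearMap,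
    ← Matrix.toEuclideanLin_conjTranspose_eq_adjoint,
    Matrix.conjTranspose_eq_transpose_of_trivial]

theorem mulE_injective {A : Matrix (Fin m) (Fin n) ℝ}
    (hker : LinearMap.ker A.mulVecLin = ⊥) : Function.Injective (mulE A) := fun _ _ h =>
  WithLp.ofLp_injective 2 (LinearMap.ker_eq_bot.mp hker (congrArg WithLp.ofLp h))

theorem Jg_eq_stabilizedFunctional (A : Matrix (Fin m) (Fin n) ℝ) (b : EuclideanSpace ℝ (Fin m))
    (L : Matrix (Fin p) (Fin n) ℝ) (g : EuclideanSpace ℝ (Fin p))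
    (N : Seminorm ℝ (EuclideanSpace ℝ (Fin p))) (γ : ℝ) :
    Jg A b L g N γ = stabilizedFunctional (mulCLM A) b (mulE L) g N.toAddGroupSeminorm γ := by
  funext v
  rw [stabilizedFunctional, adjoint_mulCLM]
  rfl

end Matrix

/-- If `u⋆` satisfies `AᵀAu⋆ = Aᵀb` and `Lu⋆ = g`, `A` has trivial kernel
(full column rank, `m ≥ n`), `γ > 0`, and `uγ` minimizes `J_γ` over `ℝⁿ`,
then `uγ = u⋆`. -/
theorem stmt4 {m n p : ℕ} (A : Matrix (Fin m) (Fin n) ℝ) (b : EuclideanSpace ℝ (Fin m))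
    (L : Matrix (Fin p) (Fin n) ℝ) (g : EuclideanSpace ℝ (Fin p))
    (N : Seminorm ℝ (EuclideanSpace ℝ (Fin p))) (γ : ℝ) (hγ : 0 < γ)
    (hmn : n ≤ m) (hker : LinearMap.ker (Matrix.mulVecLin A) = ⊥)
    (ustar : EuclideanSpace ℝ (Fin n))
    (hnormal : mulE Aᵀ (mulE A ustar) = mulE Aᵀ b)
    (hreg : mulE L ustar = g)
    (uγ : EuclideanSpace ℝ (Fin n))
    (hmin : ∀ v : EuclideanSpace ℝ (Fin n), Jg A b L g N γ uγ ≤ Jg A b L g N γ v) :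
    uγ = ustar := by
  simp only [Jg_eq_stabilizedFunctional] at hmin
  exact mulE_injective hker (stmt4_general hγ.le (by rwa [adjoint_mulCLM]) hreg (hmin ustar))
end

section
/- Let γ > 0 and let u_γ and ũ_γ be solutions of the stabilized-regularized linear system ((I + γAᵀA)AᵀA + γLᵀL) u = (I + γAᵀA)Aᵀc + γLᵀg corresponding to the right-hand data c = b and c = b̃ respectively. Assume moreover that A has trivial kernel (full column rank, m ≥ n) and let λ_min > 0 be the smallest eigenvalue of the symmetric positive definite matrix AᵀA. Then ‖u_γ − ũ_γ‖ ≤ (1/√λ_min) ‖(I + γAAᵀ)(b − b̃)‖. -/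
open scoped Matrix RealInnerProductSpace

/-!
Write `w = u - u'` and `e = (I + γAAᵀ)(b - b')`. As `(I + γAᵀA)Aᵀ = Aᵀ(I + γAAᵀ)`, subtracting the
two systems gives `(AᵀA + R) w = Aᵀe` with `R = γ(AᵀA)² + γLᵀL` positive. Pairing with `w` yields
`‖Aw‖² ≤ ⟪e, Aw⟫`, so `‖Aw‖ ≤ ‖e‖`, and the spectral bound `λ_min ‖w‖² ≤ ‖Aw‖²` does the rest.
-/

open scoped NNReal

section Hilbert

open scoped InnerProductSpace InnerProduct ComplexOrder

variable {𝕜 E F G : Type*} [RCLike 𝕜]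
  [NormedAddCommGroup E] [InnerProductSpace 𝕜 E] [CompleteSpace E]
  [NormedAddCommGroup F] [InnerProductSpace 𝕜 F] [CompleteSpace F]
  [NormedAddCommGroup G] [InnerProductSpace 𝕜 G] [CompleteSpace G]

lemma norm_apply_le_of_adjoint_comp_add_apply_eq {A : E →L[𝕜] F} {R : E →L[𝕜] E} {w : E} {e : F}
    (hR : 0 ≤ R.reApplyInnerSelf w) (h : (A† ∘L A + R) w = (A†) e) : ‖A w‖ ≤ ‖e‖ := by
  have energy : ‖A w‖ ^ 2 + R.reApplyInnerSelf w = RCLike.re ⟪e, A w⟫_𝕜 := by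
    rw [← A.adjoint_inner_left, ← h, add_apply, inner_add_left, map_add,
      A.apply_norm_sq_eq_inner_adjoint_left, R.reApplyInnerSelf_apply]
  have cauchy_schwarz : ‖A w‖ * ‖A w‖ ≤ ‖e‖ * ‖A w‖ :=
    calc ‖A w‖ * ‖A w‖ ≤ RCLike.re ⟪e, A w⟫_𝕜 := by linarith
      _ ≤ ‖e‖ * ‖A w‖ := re_inner_le_norm e (A w)
  rcases (norm_nonneg (A w)).eq_or_lt with hzero | hpos
  · exact hzero ▸ norm_nonneg e
  · exact le_of_mul_le_mul_right cauchy_schwarz hpos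

lemma isPositive_smul_sq_add_smul_adjoint_comp_self (A : E →L[𝕜] F) (L : E →L[𝕜] G)
    {γ : 𝕜} (hγ : 0 ≤ γ) :
    (γ • ((A† ∘L A) ∘L (A† ∘L A)) + γ • (L† ∘L L)).IsPositive := by
  have hA : ((A† ∘L A) ∘L (A† ∘L A)).IsPositive := by
    simpa only [A.isPositive_adjoint_comp_self.isSelfAdjoint.adjoint_eq]
      using (A† ∘L A).isPositive_adjoint_comp_self
  exact (hA.smul_of_nonneg hγ).add (L.isPositive_adjoint_comp_self.smul_of_nonneg hγ)

lemma antilipschitzWith_of_isPositive_adjoint_comp_self_sub {A : E →L[𝕜] F} {c : ℝ≥0} (hc : 0 < c)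
    (h : (A† ∘L A - ((c : ℝ) : 𝕜) • 1).IsPositive) :
    AntilipschitzWith (NNReal.sqrt c)⁻¹ A := by
  have quadratic (x : E) : c * ‖x‖ ^ 2 ≤ ‖A x‖ ^ 2 := by
    have shift_nonneg := h.re_inner_nonneg_left x
    rw [sub_apply, inner_sub_left, map_sub, ← A.apply_norm_sq_eq_inner_adjoint_left,
      smul_apply, one_apply_eq_self, inner_smul_left, RCLike.conj_ofReal,
      RCLike.re_ofReal_mul, inner_self_eq_norm_sq] at shift_nonneg
    linarith
  refine A.antilipschitz_of_bound fun x ↦ ?_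
  have sqrt_mul_le : √c * ‖x‖ ≤ ‖A x‖ := by
    simpa using Real.sqrt_le_sqrt (quadratic x)
  rw [NNReal.coe_inv, Real.coe_sqrt]
  exact (le_inv_mul_iff₀ (by positivity)).2 sqrt_mul_le

theorem stmt11_general {A : E →L[𝕜] F} {L : E →L[𝕜] G} {K : ℝ≥0} (hA : AntilipschitzWith K A)
    {γ : 𝕜} (hγ : 0 ≤ γ) {b b' : F} {g : G} {u u' : E}
    (hu : ((1 + γ • (A† ∘L A)) ∘L (A† ∘L A) + γ • (L† ∘L L) : E →L[𝕜] E) u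
      = (1 + γ • (A† ∘L A) : E →L[𝕜] E) ((A†) b) + γ • (L†) g)
    (hu' : ((1 + γ • (A† ∘L A)) ∘L (A† ∘L A) + γ • (L† ∘L L) : E →L[𝕜] E) u'
      = (1 + γ • (A† ∘L A) : E →L[𝕜] E) ((A†) b') + γ • (L†) g) :
    ‖u - u'‖ ≤ K * ‖(1 + γ • (A ∘L A†) : F →L[𝕜] F) (b - b')‖ := by
  set R := γ • ((A† ∘L A) ∘L (A† ∘L A)) + γ • (L† ∘L L) with hR
  have difference : (A† ∘L A + R) (u - u') = (A†) ((1 + γ • (A ∘L A†) : F →L[𝕜] F) (b - b')) :=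
    calc (A† ∘L A + R) (u - u')
        = ((1 + γ • (A† ∘L A)) ∘L (A† ∘L A) + γ • (L† ∘L L) : E →L[𝕜] E) (u - u') := by
          simp [hR, add_assoc]
      _ = (1 + γ • (A† ∘L A) : E →L[𝕜] E) ((A†) (b - b')) := by
          rw [map_sub, hu, hu', add_sub_add_right_eq_sub, map_sub, map_sub]
      _ = (A†) ((1 + γ • (A ∘L A†) : F →L[𝕜] F) (b - b')) := by simp
  have residual : ‖A (u - u')‖ ≤ ‖(1 + γ • (A ∘L A†) : F →L[𝕜] F) (b - b')‖ :=
    norm_apply_le_of_adjoint_comp_add_apply_eq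
      ((isPositive_smul_sq_add_smul_adjoint_comp_self A L hγ).2 _) difference
  calc ‖u - u'‖ ≤ K * ‖A (u - u')‖ := A.bound_of_antilipschitz hA _
    _ ≤ K * ‖(1 + γ • (A ∘L A†) : F →L[𝕜] F) (b - b')‖ := by gcongr

end Hilbert

section Euclidean

open scoped InnerProduct ComplexOrder

variable {𝕜 k m n : Type*} [RCLike 𝕜] [Fintype k] [Fintype m] [Fintype n] [DecidableEq n]

/-- The continuous linear map between Euclidean spaces given by a rectangular matrix; it carries
matrix systems to operator equations. -/
noncomputable def euclideanCLM :
    Matrix m n 𝕜 ≃ₗ[𝕜] EuclideanSpace 𝕜 n →L[𝕜] EuclideanSpace 𝕜 m :=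
  Matrix.toEuclideanLin ≪≫ₗ LinearMap.toContinuousLinearMap

lemma euclideanCLM_one : euclideanCLM (1 : Matrix n n 𝕜) = 1 := by
  ext; simp [euclideanCLM]

lemma euclideanCLM_mul [DecidableEq m] (M : Matrix k m 𝕜) (N : Matrix m n 𝕜) :
    euclideanCLM (M * N) = euclideanCLM M ∘L euclideanCLM N := by
  ext; simp [euclideanCLM]

lemma euclideanCLM_conjTranspose [DecidableEq m] (M : Matrix m n 𝕜) :
    euclideanCLM Mᴴ = (euclideanCLM M)† := by
  simp [euclideanCLM, Matrix.toEuclideanLin_conjTranspose_eq_adjoint,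
    LinearMap.adjoint_toContinuousLinearMap]

lemma isPositive_euclideanCLM_iff {M : Matrix n n 𝕜} :
    (euclideanCLM M).IsPositive ↔ M.PosSemidef :=
  (LinearMap.isPositive_toContinuousLinearMap_iff _).trans Matrix.isPositive_toEuclideanLin_iff

open scoped MatrixOrder in
lemma antilipschitzWith_euclideanCLM_of_mem_lowerBounds_spectrum {A : Matrix m n 𝕜} {c : ℝ≥0}
    (hc : 0 < c) (h : (c : ℝ) ∈ lowerBounds (spectrum ℝ (Aᴴ * A))) :
    AntilipschitzWith (NNReal.sqrt c)⁻¹ (euclideanCLM A) := by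
  classical
  have loewner : algebraMap ℝ (Matrix n n 𝕜) c ≤ Aᴴ * A :=
    algebraMap_le_of_le_spectrum (fun _ hx ↦ h hx) (Matrix.isHermitian_conjTranspose_mul_self A)
  have shift_isPositive := isPositive_euclideanCLM_iff.2 (Matrix.le_iff.1 loewner)
  refine antilipschitzWith_of_isPositive_adjoint_comp_self_sub hc ?_
  rwa [Algebra.algebraMap_eq_smul_one, ← algebraMap_smul 𝕜, map_sub, map_smul,
    euclideanCLM_one, euclideanCLM_mul, euclideanCLM_conjTranspose] at shift_isPositive

end Euclidean

lemma mulE_eq_euclideanCLM {m n : ℕ} (A : Matrix (Fin m) (Fin n) ℝ)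
    (v : EuclideanSpace ℝ (Fin n)) : mulE A v = euclideanCLM A v :=
  rfl

/-- If `γ > 0` and `u`, `u'` solve the stabilized-regularized linear system
`((I + γAᵀA)AᵀA + γLᵀL) u = (I + γAᵀA)Aᵀc + γLᵀg` with data `c = b`, `c = b'`
respectively, `A` has trivial kernel (full column rank, `m ≥ n`), and `λmin > 0`
is the smallest eigenvalue of `AᵀA`, then
`‖u − u'‖ ≤ (1/√λmin) ‖(I + γAAᵀ)(b − b')‖`. -/
theorem stmt11 {m n p : ℕ} (A : Matrix (Fin m) (Fin n) ℝ)
    (b b' : EuclideanSpace ℝ (Fin m))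
    (L : Matrix (Fin p) (Fin n) ℝ) (g : EuclideanSpace ℝ (Fin p))
    (γ : ℝ) (hγ : 0 < γ) (u u' : EuclideanSpace ℝ (Fin n))
    (hu : mulE ((1 + γ • (Aᵀ * A)) * (Aᵀ * A) + γ • (Lᵀ * L)) u
        = mulE (1 + γ • (Aᵀ * A)) (mulE Aᵀ b) + γ • mulE Lᵀ g)
    (hu' : mulE ((1 + γ • (Aᵀ * A)) * (Aᵀ * A) + γ • (Lᵀ * L)) u'
        = mulE (1 + γ • (Aᵀ * A)) (mulE Aᵀ b') + γ • mulE Lᵀ g)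
    (hmn : n ≤ m) (hker : LinearMap.ker (Matrix.mulVecLin A) = ⊥)
    (lmin : ℝ) (hlmin : IsLeast (spectrum ℝ (Aᵀ * A)) lmin) (hlminpos : 0 < lmin) :
    ‖u - u'‖ ≤ (1 / Real.sqrt lmin) * ‖mulE (1 + γ • (A * Aᵀ)) (b - b')‖ := by
  lift lmin to ℝ≥0 using hlminpos.le
  simp only [mulE_eq_euclideanCLM, ← Matrix.conjTranspose_eq_transpose_of_trivial, map_add,
    map_smul, euclideanCLM_one, euclideanCLM_mul, euclideanCLM_conjTranspose] at hu hu' hlmin ⊢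
  have hA : AntilipschitzWith (NNReal.sqrt lmin)⁻¹ (euclideanCLM A) :=
    antilipschitzWith_euclideanCLM_of_mem_lowerBounds_spectrum (mod_cast hlminpos) hlmin.2
  simpa using stmt11_general hA hγ.le hu hu'
end

section
/- Let γ > 0, suppose u* ∈ ℝⁿ satisfies AᵀAu* = Aᵀb and Lu* = g, suppose A has trivial kernel (full column rank, m ≥ n), and let λ_min > 0 be the smallest eigenvalue of the symmetric positive definite matrix AᵀA. Let ũ_γ be a solution of the stabilized-regularized linear system ((I + γAᵀA)AᵀA + γLᵀL) u = (I + γAᵀA)Aᵀb̃ + γLᵀg with perturbed right-hand data b̃ ∈ ℝᵐ, and assume the corresponding system with unperturbed data b also admits a solution. Then ‖u* − ũ_γ‖ ≤ (1/√λ_min) ‖(I + γAAᵀ)(b − b̃)‖. -/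
open scoped Matrix RealInnerProductSpace

/-!
By consistency of the two normal equations, `u⋆` solves the stabilized system with the exact data
`b`, so the error `e = u⋆ - u'` solves it with data `b - b'` and `g = 0`. Since `1 + γ A†A` can be
pushed through `A†`, the right-hand side is `A† w` with `w = (1 + γ AA†) (b - b')`. Testing the
equation against `e` gives `‖A e‖² + γ ‖A†A e‖² + γ ‖L e‖² = re ⟪w, A e⟫ ≤ ‖w‖ ‖A e‖`, whence
`‖A e‖ ≤ ‖w‖`, and `√lmin ‖e‖ ≤ ‖A e‖`.
-/

open scoped InnerProduct InnerProductSpace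

theorem le_one_div_sqrt_mul_of_mul_sq_le_sq {c x y : ℝ} (hc : 0 < c) (hy : 0 ≤ y)
    (h : c * x ^ 2 ≤ y ^ 2) : x ≤ 1 / √c * y := by
  rw [one_div_mul_eq_div, le_div_iff₀' (Real.sqrt_pos.2 hc)]
  refine le_of_sq_le_sq ?_ hy
  rwa [mul_pow, Real.sq_sqrt hc.le]

section Hilbert

variable {𝕜 E F G : Type*} [RCLike 𝕜]
  [NormedAddCommGroup E] [InnerProductSpace 𝕜 E] [CompleteSpace E]
  [NormedAddCommGroup F] [InnerProductSpace 𝕜 F] [CompleteSpace F]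
  [NormedAddCommGroup G] [InnerProductSpace 𝕜 G] [CompleteSpace G]
  {A : E →L[𝕜] F} {L : E →L[𝕜] G} {γ : 𝕜}

/-- The operator `(1 + γ A†A) A†A + γ L†L` of the stabilized-regularized normal equations for the
data operator `A`, the regularizer `L` and the weight `γ`. The weight is a scalar of the ground
field rather than a real number; its positivity becomes `0 ≤ re γ`. -/
noncomputable def stabilizedOp (A : E →L[𝕜] F) (L : E →L[𝕜] G) (γ : 𝕜) : E →L[𝕜] E :=
  (1 + γ • (A† ∘L A)) ∘L (A† ∘L A) + γ • (L† ∘L L)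

theorem stabilizedOp_apply_of_normal_eq {u : E} {b : F} {g : G}
    (hb : (A†) (A u) = (A†) b) (hg : (L†) (L u) = (L†) g) :
    stabilizedOp A L γ u = (1 + γ • (A† ∘L A)) ((A†) b) + γ • (L†) g := by
  simp only [stabilizedOp, add_apply, ContinuousLinearMap.comp_apply, smul_apply, hb, hg]

theorem one_add_smul_adjoint_comp_self_apply_adjoint (A : E →L[𝕜] F) (γ : 𝕜) (y : F) :
    (1 + γ • (A† ∘L A)) ((A†) y) = (A†) ((1 + γ • (A ∘L A†)) y) := by
  simp

theorem re_inner_stabilizedOp_self (x : E) :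
    RCLike.re ⟪stabilizedOp A L γ x, x⟫_𝕜 =
      ‖A x‖ ^ 2 + RCLike.re γ * (‖(A†) (A x)‖ ^ 2 + ‖L x‖ ^ 2) := by
  have hA : ⟪(A†) (A x), x⟫_𝕜 = ⟪A x, A x⟫_𝕜 := A.adjoint_inner_left x (A x)
  have hAA : ⟪(A†) (A ((A†) (A x))), x⟫_𝕜 = ⟪(A†) (A x), (A†) (A x)⟫_𝕜 := by
    rw [A.adjoint_inner_left, A.adjoint_inner_right]
  have hL : ⟪(L†) (L x), x⟫_𝕜 = ⟪L x, L x⟫_𝕜 := L.adjoint_inner_left x (L x)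
  simp only [stabilizedOp, add_apply, ContinuousLinearMap.comp_apply, smul_apply,
    one_apply_eq_self, inner_add_left, inner_smul_left, hA, hAA, hL, map_add,
    RCLike.mul_re, inner_self_im, inner_self_eq_norm_sq, RCLike.conj_re]
  ring

theorem norm_sq_le_re_inner_stabilizedOp_self (hγ : 0 ≤ RCLike.re γ) (x : E) :
    ‖A x‖ ^ 2 ≤ RCLike.re ⟪stabilizedOp A L γ x, x⟫_𝕜 := by
  rw [re_inner_stabilizedOp_self]
  exact le_add_of_nonneg_right (by positivity)

theorem norm_apply_le_of_stabilizedOp_eq_adjoint (hγ : 0 ≤ RCLike.re γ) {x : E} {w : F}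
    (h : stabilizedOp A L γ x = (A†) w) : ‖A x‖ ≤ ‖w‖ := by
  have hsq : ‖A x‖ * ‖A x‖ ≤ ‖w‖ * ‖A x‖ :=
    calc ‖A x‖ * ‖A x‖ = ‖A x‖ ^ 2 := (sq _).symm
      _ ≤ RCLike.re ⟪stabilizedOp A L γ x, x⟫_𝕜 := norm_sq_le_re_inner_stabilizedOp_self hγ x
      _ = RCLike.re ⟪w, A x⟫_𝕜 := by rw [h, ContinuousLinearMap.adjoint_inner_left]
      _ ≤ ‖w‖ * ‖A x‖ := re_inner_le_norm w (A x)
  rcases (norm_nonneg (A x)).eq_or_lt with h0 | hpos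
  · exact h0 ▸ norm_nonneg w
  · exact le_of_mul_le_mul_right hsq hpos

theorem stmt13_general {b b' : F} {g : G} (hγ : 0 ≤ RCLike.re γ) {ustar u' : E}
    (hnormal : (A†) (A ustar) = (A†) b) (hreg : (L†) (L ustar) = (L†) g)
    {lmin : ℝ} (hlmin : ∀ x, lmin * ‖x‖ ^ 2 ≤ ‖A x‖ ^ 2) (hlminpos : 0 < lmin)
    (hu' : stabilizedOp A L γ u' = (1 + γ • (A† ∘L A)) ((A†) b') + γ • (L†) g) :
    ‖ustar - u'‖ ≤ 1 / √lmin * ‖(1 + γ • (A ∘L A†)) (b - b')‖ := by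
  have herror : stabilizedOp A L γ (ustar - u') = (A†) ((1 + γ • (A ∘L A†)) (b - b')) := by
    rw [map_sub, stabilizedOp_apply_of_normal_eq hnormal hreg, hu', add_sub_add_right_eq_sub,
      ← map_sub, ← map_sub, one_add_smul_adjoint_comp_self_apply_adjoint]
  calc ‖ustar - u'‖ ≤ 1 / √lmin * ‖A (ustar - u')‖ :=
        le_one_div_sqrt_mul_of_mul_sq_le_sq hlminpos (norm_nonneg _) (hlmin _)
    _ ≤ 1 / √lmin * ‖(1 + γ • (A ∘L A†)) (b - b')‖ := by
        gcongr
        exact norm_apply_le_of_stabilizedOp_eq_adjoint hγ herror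

end Hilbert

section Matrix

open scoped ComplexOrder MatrixOrder

variable {𝕜 l m n : Type*} [RCLike 𝕜] [Fintype l] [Fintype m] [Fintype n] [DecidableEq n]

/-- The bounded operator between Euclidean spaces given by a matrix: the rectangular counterpart
of `Matrix.toEuclideanCLM`, through which matrix statements become statements about operators on
Hilbert spaces. -/
noncomputable def rectToEuclideanCLM :
    Matrix m n 𝕜 ≃ₗ[𝕜] EuclideanSpace 𝕜 n →L[𝕜] EuclideanSpace 𝕜 m :=
  Matrix.toEuclideanLin ≪≫ₗ LinearMap.toContinuousLinearMap

theorem rectToEuclideanCLM_mul [DecidableEq m] (M : Matrix l m 𝕜) (N : Matrix m n 𝕜) :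
    rectToEuclideanCLM (M * N) = rectToEuclideanCLM M ∘L rectToEuclideanCLM N := by
  ext x : 1
  exact LinearMap.congr_fun (Matrix.toLpLin_mul 2 2 2 M N) x

theorem rectToEuclideanCLM_one : rectToEuclideanCLM (1 : Matrix n n 𝕜) = 1 := by
  ext x : 1
  exact LinearMap.congr_fun (Matrix.toLpLin_one 2) x

theorem rectToEuclideanCLM_conjTranspose [DecidableEq m] (M : Matrix m n 𝕜) :
    rectToEuclideanCLM Mᴴ = (rectToEuclideanCLM M)† :=
  (congrArg _ M.toEuclideanLin_conjTranspose_eq_adjoint).trans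
    (LinearMap.adjoint_toContinuousLinearMap _)

theorem posSemidef_sub_smul_one_of_mem_lowerBounds_spectrum {M : Matrix n n 𝕜}
    (hM : M.IsHermitian) {c : ℝ} (hc : c ∈ lowerBounds (spectrum ℝ M)) :
    (M - (c : 𝕜) • (1 : Matrix n n 𝕜)).PosSemidef := by
  have hle : algebraMap ℝ (Matrix n n 𝕜) c ≤ M :=
    algebraMap_le_of_le_spectrum (fun _ hr => hc hr) hM
  rwa [Algebra.algebraMap_eq_smul_one, RCLike.real_smul_eq_coe_smul (K := 𝕜),
    Matrix.le_iff] at hle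

theorem mul_norm_sq_le_norm_rectToEuclideanCLM_sq {M : Matrix m n 𝕜} {c : ℝ}
    (hc : c ∈ lowerBounds (spectrum ℝ (Mᴴ * M))) (x : EuclideanSpace 𝕜 n) :
    c * ‖x‖ ^ 2 ≤ ‖rectToEuclideanCLM M x‖ ^ 2 := by
  classical
  have hpsd : (Mᴴ * M - (c : 𝕜) • (1 : Matrix n n 𝕜)).PosSemidef :=
    posSemidef_sub_smul_one_of_mem_lowerBounds_spectrum
      (Matrix.isHermitian_conjTranspose_mul_self M) hc
  have hpos : 0 ≤ RCLike.re ⟪rectToEuclideanCLM (Mᴴ * M - (c : 𝕜) • 1) x, x⟫_𝕜 :=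
    (Matrix.isPositive_toEuclideanLin_iff.2 hpsd).re_inner_nonneg_left x
  have hgram : RCLike.re ⟪rectToEuclideanCLM (Mᴴ * M) x, x⟫_𝕜 = ‖rectToEuclideanCLM M x‖ ^ 2 := by
    rw [rectToEuclideanCLM_mul, rectToEuclideanCLM_conjTranspose,
      ContinuousLinearMap.apply_norm_sq_eq_inner_adjoint_left]
  have hscalar : RCLike.re ⟪rectToEuclideanCLM ((c : 𝕜) • (1 : Matrix n n 𝕜)) x, x⟫_𝕜 =
      c * ‖x‖ ^ 2 := by
    rw [map_smul, rectToEuclideanCLM_one, smul_apply, one_apply_eq_self, inner_smul_left,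
      RCLike.conj_ofReal, RCLike.re_ofReal_mul, inner_self_eq_norm_sq]
  rwa [map_sub, sub_apply, inner_sub_left, map_sub, hgram, hscalar, sub_nonneg] at hpos

end Matrix

theorem mulE_eq_rectToEuclideanCLM {m n : ℕ} (A : Matrix (Fin m) (Fin n) ℝ)
    (v : EuclideanSpace ℝ (Fin n)) : mulE A v = rectToEuclideanCLM A v :=
  rfl

/-- Let `γ > 0`, let `u⋆` satisfy `AᵀAu⋆ = Aᵀb` and `Lu⋆ = g`, suppose `A` has trivial
kernel (full column rank, `m ≥ n`) and `λmin > 0` is the smallest eigenvalue of `AᵀA`.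
If `u'` solves the stabilized-regularized system with perturbed data `b'` and the
corresponding system with unperturbed data `b` also admits a solution, then
`‖u⋆ − u'‖ ≤ (1/√λmin) ‖(I + γAAᵀ)(b − b')‖`. -/
theorem stmt13 {m n p : ℕ} (A : Matrix (Fin m) (Fin n) ℝ)
    (b b' : EuclideanSpace ℝ (Fin m))
    (L : Matrix (Fin p) (Fin n) ℝ) (g : EuclideanSpace ℝ (Fin p))
    (γ : ℝ) (hγ : 0 < γ)
    (ustar : EuclideanSpace ℝ (Fin n))
    (hnormal : mulE Aᵀ (mulE A ustar) = mulE Aᵀ b)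
    (hreg : mulE L ustar = g)
    (hmn : n ≤ m) (hker : LinearMap.ker (Matrix.mulVecLin A) = ⊥)
    (lmin : ℝ) (hlmin : IsLeast (spectrum ℝ (Aᵀ * A)) lmin) (hlminpos : 0 < lmin)
    (u' : EuclideanSpace ℝ (Fin n))
    (hu' : mulE ((1 + γ • (Aᵀ * A)) * (Aᵀ * A) + γ • (Lᵀ * L)) u'
        = mulE (1 + γ • (Aᵀ * A)) (mulE Aᵀ b') + γ • mulE Lᵀ g)
    (hex : ∃ u : EuclideanSpace ℝ (Fin n),
      mulE ((1 + γ • (Aᵀ * A)) * (Aᵀ * A) + γ • (Lᵀ * L)) u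
        = mulE (1 + γ • (Aᵀ * A)) (mulE Aᵀ b) + γ • mulE Lᵀ g) :
    ‖ustar - u'‖ ≤ (1 / Real.sqrt lmin) * ‖mulE (1 + γ • (A * Aᵀ)) (b - b')‖ := by
  simp only [mulE_eq_rectToEuclideanCLM, ← Matrix.conjTranspose_eq_transpose_of_trivial, map_add,
    map_smul, rectToEuclideanCLM_mul, rectToEuclideanCLM_one, rectToEuclideanCLM_conjTranspose]
    at hnormal hlmin hu' ⊢
  exact stmt13_general hγ.le hnormal (congrArg _ hreg)
    (mul_norm_sq_le_norm_rectToEuclideanCLM_sq hlmin.2) hlminpos hu'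
end
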